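/- Let p > 0, x† ∈ X, y = T x†, and for α > 0 let x_α = g_α(T*T)T*y. Suppose there exist C > 0 and ᾱ ∈ (0,1) such that ‖x† − x_α‖ ≤ C·(−ln α)^{−p} for all α ∈ (0,ᾱ]. Then for every q with 0 < q < p there exist ρ > 0 and w ∈ X with ‖w‖ ≤ ρ such that x† = f_q(T*T)w. -/

import Mathlib

open ContinuousLinearMap

/-- The generator function `g_α(λ) = 1/(λ + (1 − λ^{√α})²)` with `g_α(0) = 1`,
where `λ^{√α} = exp(√α · log λ)`. -/
noncomputable def genFun (α : ℝ) : ℝ → ℝ := fun t =>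
  if t = 0 then 1 else 1 / (t + (1 - Real.exp (Real.sqrt α * Real.log t)) ^ 2)

/-- `f_q(λ) = (−log λ)^{−q}` (with `f_q(0) = 0`). -/
noncomputable def fpFun (q : ℝ) : ℝ → ℝ := fun t => (-Real.log t) ^ (-q)

lemma aux_fp_cont (q : ℝ) (hq : 0 < q) :
    ContinuousOn (fpFun q) (Set.Icc 0 (Real.exp (-1))) := by
  intro t ht
  rcases eq_or_lt_of_le ht.1 with h0 | h0
  · subst h0
    have h1 : fpFun q 0 = 0 := by
      simp [fpFun, Real.zero_rpow (neg_ne_zero.mpr hq.ne')]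
    have h2 : Filter.Tendsto (fpFun q) (nhdsWithin 0 (Set.Ioi 0)) (nhds 0) := by
      have := (tendsto_rpow_neg_atTop hq).comp
        (Filter.tendsto_neg_atBot_atTop.comp Real.tendsto_log_nhdsGT_zero)
      exact this
    have h3 : ContinuousWithinAt (fpFun q) (Set.Ioi 0) 0 := by
      unfold ContinuousWithinAt; rw [h1]; exact h2
    have h4 : ContinuousWithinAt (fpFun q) (insert 0 (Set.Ioi 0)) 0 := h3.insert
    refine h4.mono ?_
    intro s hs
    rcases eq_or_lt_of_le hs.1 with h | h
    · left; exact h.symm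
    · right; exact h
  · apply ContinuousAt.continuousWithinAt
    have hl : Real.log t ≤ -1 := by
      have := Real.log_le_log h0 ht.2
      rwa [Real.log_exp] at this
    unfold fpFun
    refine ContinuousAt.rpow_const ?_ (Or.inl (by linarith))
    exact (Real.continuousAt_log h0.ne').neg

lemma aux_gen_eq (α : ℝ) (hα : 0 < α) (t : ℝ) (ht : 0 ≤ t) :
    genFun α t = 1 / (t + (1 - t ^ (Real.sqrt α)) ^ 2) := by
  unfold genFun
  have hs : Real.sqrt α ≠ 0 := (Real.sqrt_pos.mpr hα).ne'
  rcases eq_or_lt_of_le ht with h0 | h0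
  · subst h0; simp [Real.zero_rpow hs]
  · rw [if_neg h0.ne', Real.rpow_def_of_pos h0, mul_comm]

lemma aux_den_pos (α : ℝ) (hα : 0 < α) (t : ℝ) (ht : 0 ≤ t) :
    0 < t + (1 - t ^ (Real.sqrt α)) ^ 2 := by
  have hs : Real.sqrt α ≠ 0 := (Real.sqrt_pos.mpr hα).ne'
  rcases eq_or_lt_of_le ht with h0 | h0
  · subst h0; simp [Real.zero_rpow hs]
  · positivity

lemma aux_gen_cont (α : ℝ) (hα : 0 < α) :
    ContinuousOn (genFun α) (Set.Icc 0 (Real.exp (-1))) := by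
  have h : ContinuousOn (fun t : ℝ => 1 / (t + (1 - t ^ (Real.sqrt α)) ^ 2))
      (Set.Icc 0 (Real.exp (-1))) := by
    have hc : Continuous (fun t : ℝ => t ^ (Real.sqrt α)) :=
      Real.continuous_rpow_const (Real.sqrt_nonneg α)
    refine ContinuousOn.div (by fun_prop) (by fun_prop) ?_
    intro t ht
    exact (aux_den_pos α hα t ht.1).ne'
  exact h.congr (fun t ht => aux_gen_eq α hα t ht.1)

lemma aux_res_lower (a : ℝ) (ha : 1 ≤ a) (t : ℝ) (ht : 0 ≤ t) (hta : t ≤ Real.exp (-a)) :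
    1 / 5 ≤ 1 - t * genFun (Real.exp (-a)) t := by
  have hα := Real.exp_pos (-a)
  rw [aux_gen_eq _ hα t ht]
  have hd := aux_den_pos _ hα t ht
  set α := Real.exp (-a) with hαd
  set σ := Real.sqrt α with hσ
  have hσp : 0 < σ := Real.sqrt_pos.mpr hα
  have hσ2 : σ ^ 2 = α := Real.sq_sqrt hα.le
  have hσ1 : σ ≤ 1 := by
    have h9 : α ≤ 1 := Real.exp_le_one_iff.mpr (by linarith)
    nlinarith
  have h1 : t ^ σ ≤ α ^ σ := Real.rpow_le_rpow ht hta hσp.le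
  have h2 : α ^ σ = Real.exp (-(a * σ)) := by
    rw [hαd, ← Real.exp_mul]; ring_nf
  have h3 : Real.exp (-(a * σ)) ≤ Real.exp (-σ) := by
    apply Real.exp_le_exp.mpr; nlinarith
  have h4 : Real.exp (-σ) ≤ 1 - σ / 2 := by
    rw [Real.exp_neg]
    have h5 : 1 + σ ≤ Real.exp σ := by linarith [Real.add_one_le_exp σ]
    calc (Real.exp σ)⁻¹ ≤ (1 + σ)⁻¹ := inv_anti₀ (by linarith) h5
      _ ≤ 1 - σ / 2 := by
        rw [inv_le_iff_one_le_mul₀ (by linarith)]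
        nlinarith
  have h6 : σ / 2 ≤ 1 - t ^ σ := by linarith
  have h7 : t / 4 ≤ (1 - t ^ σ) ^ 2 := by nlinarith
  have h8 : 1 - t * (1 / (t + (1 - t ^ σ) ^ 2)) = (1 - t ^ σ) ^ 2 / (t + (1 - t ^ σ) ^ 2) := by
    field_simp; ring
  rw [h8, le_div_iff₀ hd]
  linarith

section
variable {X : Type*} [NormedAddCommGroup X] [InnerProductSpace ℂ X] [CompleteSpace X]

lemma aux_norm_sq (A : X →L[ℂ] X) (hA : IsSelfAdjoint A) (f : ℝ → ℝ)
    (hf : ContinuousOn f (spectrum ℝ A)) (x : X) :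
    ‖cfc f A x‖ ^ 2 = RCLike.re (inner ℂ (cfc (fun t => f t ^ 2) A x) x) := by
  have hsa : IsSelfAdjoint (cfc f A) := cfc_predicate f A
  rw [cfc_pow f 2 A hf hA, pow_two (cfc f A), mul_apply_eq_comp,
    ← ContinuousLinearMap.adjoint_inner_right, hsa.adjoint_eq]
  exact norm_sq_eq_re_inner (𝕜 := ℂ) _

lemma aux_norm_le (A : X →L[ℂ] X) (f g : ℝ → ℝ)
    (hf : ContinuousOn f (spectrum ℝ A)) (hg : ContinuousOn g (spectrum ℝ A))
    (M : ℝ) (hM : 0 ≤ M)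
    (hfg : ∀ t ∈ spectrum ℝ A, |f t| ≤ M * |g t|) (x : X) :
    ‖cfc f A x‖ ≤ M * ‖cfc g A x‖ := by
  by_cases hA : IsSelfAdjoint A
  · have hle : cfc (fun t => f t ^ 2) A ≤ cfc (fun t => (M * g t) ^ 2) A := by
      apply cfc_mono
      · intro t ht
        apply sq_le_sq.mpr
        rw [abs_mul, abs_of_nonneg hM]
        exact hfg t ht
      · exact hf.pow 2
      · exact (hg.const_smul M).pow 2
    have h1 := (ContinuousLinearMap.le_def _ _).mp hle
    have h2 := h1.re_inner_nonneg_left x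
    rw [_root_.sub_apply, inner_sub_left, map_sub] at h2
    have h4 := aux_norm_sq A hA (fun t => M * g t) (hg.const_smul M) x
    rw [← aux_norm_sq A hA f hf x, ← h4] at h2
    have h5 : ‖cfc (fun t => M * g t) A x‖ = M * ‖cfc g A x‖ := by
      rw [cfc_const_mul M g A hg, _root_.smul_apply, norm_smul,
        Real.norm_of_nonneg hM]
    rw [h5] at h2
    exact (sq_le_sq₀ (norm_nonneg _) (by positivity)).mp (by linarith)
  · rw [cfc_apply_of_not_predicate A hA, cfc_apply_of_not_predicate A hA]; simp

end

/-- (Converse result.) Let `T` be a bounded injective operator between complex Hilbert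
spaces with `‖T*T‖ ≤ e⁻¹`, let `p > 0`, `x† ∈ X`, `y = T x†`, and for `α > 0` let
`x_α = g_α(T*T)T*y`. Suppose there exist `C > 0` and `ᾱ ∈ (0,1)` such that
`‖x† − x_α‖ ≤ C·(−log α)^{−p}` for all `α ∈ (0,ᾱ]`. Then for every `q` with
`0 < q < p` there exist `ρ > 0` and `w` with `‖w‖ ≤ ρ` such that `x† = f_q(T*T)w`. -/
theorem stmt12 {X Y : Type*} [NormedAddCommGroup X] [InnerProductSpace ℂ X]
    [CompleteSpace X] [NormedAddCommGroup Y] [InnerProductSpace ℂ Y] [CompleteSpace Y]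
    (T : X →L[ℂ] Y) (hTinj : Function.Injective T)
    (hTnorm : ‖(adjoint T) ∘L T‖ ≤ Real.exp (-1))
    (p : ℝ) (hp : 0 < p) (xdag : X)
    (C : ℝ) (hC : 0 < C) (αbar : ℝ) (hαbar : αbar ∈ Set.Ioo (0 : ℝ) 1)
    (hrate : ∀ α ∈ Set.Ioc (0 : ℝ) αbar,
      ‖xdag - cfc (genFun α) ((adjoint T) ∘L T) ((adjoint T) (T xdag))‖ ≤
        C * (-Real.log α) ^ (-p)) :
    ∀ q : ℝ, 0 < q → q < p →
      ∃ ρ > (0 : ℝ), ∃ w : X, ‖w‖ ≤ ρ ∧ xdag = cfc (fpFun q) ((adjoint T) ∘L T) w := by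
  intro q hq hqp
  set A : X →L[ℂ] X := (adjoint T) ∘L T with hAdef
  have hAA : ∀ x, (adjoint T) (T x) = A x := fun x => rfl
  have hpos : 0 ≤ A := by
    rw [ContinuousLinearMap.nonneg_iff_isPositive]
    exact ContinuousLinearMap.isPositive_adjoint_comp_self T
  have hsa : IsSelfAdjoint A := IsSelfAdjoint.of_nonneg hpos
  have hspec : spectrum ℝ A ⊆ Set.Icc 0 (Real.exp (-1)) := by
    intro t ht
    refine ⟨spectrum_nonneg_of_nonneg hpos ht, ?_⟩
    have h1 := spectrum.norm_le_norm_mul_of_mem ht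
    have h2 : ‖(1 : X →L[ℂ] X)‖ ≤ 1 := ContinuousLinearMap.norm_id_le
    have h3 := le_abs_self t
    rw [Real.norm_eq_abs] at h1
    nlinarith [norm_nonneg A]
  have hfc : ContinuousOn (fpFun q) (spectrum ℝ A) := (aux_fp_cont q hq).mono hspec
  have hf0 : ∀ t ∈ spectrum ℝ A, 0 ≤ fpFun q t := by
    intro t ht
    rcases eq_or_lt_of_le (hspec ht).1 with h0 | h0
    · subst h0
      simp [fpFun, Real.zero_rpow (neg_ne_zero.mpr hq.ne')]
    · have hl := Real.log_le_log h0 (hspec ht).2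
      rw [Real.log_exp] at hl
      exact Real.rpow_nonneg (by linarith) _
  -- the scale
  set K : ℝ := max 1 (-Real.log αbar) with hK
  have hK1 : 1 ≤ K := le_max_left _ _
  set a : ℕ → ℝ := fun n => K * 2 ^ n with ha
  have ha1 : ∀ n, 1 ≤ a n := fun n => by
    have : (1 : ℝ) ≤ 2 ^ n := one_le_pow₀ (by norm_num)
    simp only [ha]; nlinarith
  have ha0 : ∀ n, 0 < a n := fun n => by linarith [ha1 n]
  have haK : ∀ n, K ≤ a n := fun n => by
    have : (1 : ℝ) ≤ 2 ^ n := one_le_pow₀ (by norm_num)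
    simp only [ha]; nlinarith
  have hgc : ∀ n, ContinuousOn (genFun (Real.exp (-a n))) (spectrum ℝ A) :=
    fun n => (aux_gen_cont _ (Real.exp_pos _)).mono hspec
  set r : ℕ → ℝ → ℝ := fun n t => 1 - t * genFun (Real.exp (-a n)) t with hr
  have hrc : ∀ n, ContinuousOn (r n) (spectrum ℝ A) := fun n =>
    continuousOn_const.sub (continuousOn_id.mul (hgc n))
  have hrate' : ∀ n, ‖cfc (r n) A xdag‖ ≤ C * (a n) ^ (-p) := by
    intro n
    have hle : Real.exp (-a n) ≤ αbar := by
      rw [← Real.le_log_iff_exp_le hαbar.1]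
      have := haK n
      have := le_max_right 1 (-Real.log αbar)
      linarith
    have h1 := hrate (Real.exp (-a n)) ⟨Real.exp_pos _, hle⟩
    rw [Real.log_exp, neg_neg, hAA] at h1
    have h2 : cfc (r n) A = 1 - cfc (genFun (Real.exp (-a n))) A * A := by
      have e : r n = fun t => (fun _ : ℝ => (1 : ℝ)) t
          - (fun t => genFun (Real.exp (-a n)) t * id t) t := by
        funext t; simp only [hr, id]; ring
      rw [e, cfc_sub (fun _ : ℝ => (1 : ℝ)) (fun t => genFun (Real.exp (-a n)) t * id t) A
        continuousOn_const ((hgc n).mul continuousOn_id),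
        cfc_mul _ _ A (hgc n) continuousOn_id, cfc_const_one ℝ A, cfc_id ℝ A]
    rw [h2]
    simpa using h1
  set b : ℕ → ℝ := fun n => (a n) ^ (-q) with hb
  have hb0 : ∀ n, 0 < b n := fun n => Real.rpow_pos_of_pos (ha0 n) _
  have hbm : ∀ n, b (n + 1) ≤ b n := fun n => by
    apply Real.rpow_le_rpow_of_nonpos (ha0 n) _ (by linarith)
    simp only [ha, pow_succ]
    nlinarith [ha0 n, show a n = K * 2 ^ n from rfl]
  have hlow : ∀ n, ∀ t ∈ spectrum ℝ A, fpFun q t < b n → 1 ≤ 5 * |r n t| := by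
    intro n t ht hlt
    have hta : t ≤ Real.exp (-a n) := by
      rcases eq_or_lt_of_le (hspec ht).1 with h0 | h0
      · rw [← h0]; exact (Real.exp_pos _).le
      · by_contra hcon
        push Not at hcon
        have hl := Real.log_le_log h0 (hspec ht).2
        rw [Real.log_exp] at hl
        have hl2 := Real.log_lt_log (Real.exp_pos _) hcon
        rw [Real.log_exp] at hl2
        have : b n ≤ fpFun q t :=
          Real.rpow_le_rpow_of_nonpos (by linarith) (by linarith) (by linarith)
        linarith
    have h1 := aux_res_lower (a n) (ha1 n) t (hspec ht).1 hta
    have h2 := le_abs_self (r n t)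
    simp only [hr] at h2 ⊢
    linarith
  set h : ℕ → ℝ → ℝ := fun n t => 1 / max (fpFun q t) (b n) with hh
  have hm0 : ∀ n t, 0 < max (fpFun q t) (b n) := fun n t => lt_max_of_lt_right (hb0 n)
  have hhc : ∀ n, ContinuousOn (h n) (spectrum ℝ A) := fun n =>
    continuousOn_const.div (hfc.sup continuousOn_const) (fun t _ => (hm0 n t).ne')
  set u : ℕ → X := fun n => cfc (h n) A xdag with hu
  have hdiff : ∀ n, ‖u n - u (n + 1)‖ ≤ 5 / b (n + 1) * (C * (a n) ^ (-p)) := by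
    intro n
    have h1 : u n - u (n + 1) = cfc (fun t => h n t - h (n + 1) t) A xdag := by
      rw [cfc_sub (h n) (h (n + 1)) A (hhc n) (hhc (n + 1))]; rfl
    rw [h1]
    have hM : 0 ≤ 5 / b (n + 1) := (div_pos (by norm_num) (hb0 _)).le
    refine (aux_norm_le A _ (r n) ((hhc n).sub (hhc (n + 1))) (hrc n) _ hM ?_ xdag).trans
      (mul_le_mul_of_nonneg_left (hrate' n) hM)
    intro t ht
    change |h n t - h (n + 1) t| ≤ _
    rcases lt_or_ge (fpFun q t) (b n) with hlt | hge
    · have h2 := hlow n t ht hlt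
      have e1 : h n t ≤ h (n + 1) t :=
        one_div_le_one_div_of_le (hm0 _ _) (max_le_max le_rfl (hbm n))
      have e2 : 0 ≤ h n t := (one_div_pos.mpr (hm0 _ _)).le
      have e3 : h (n + 1) t ≤ 1 / b (n + 1) :=
        one_div_le_one_div_of_le (hb0 _) (le_max_right _ _)
      have e4 : 0 < 1 / b (n + 1) := one_div_pos.mpr (hb0 _)
      rw [abs_of_nonpos (by linarith)]
      have e5 : 5 / b (n + 1) * |r n t| = 1 / b (n + 1) * (5 * |r n t|) := by ring
      rw [e5]
      nlinarith
    · have e : h n t - h (n + 1) t = 0 := by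
        simp only [hh]
        rw [max_eq_left hge, max_eq_left ((hbm n).trans hge), sub_self]
      rw [e, abs_zero]
      positivity
  have hcau : CauchySeq u := by
    refine cauchySeq_of_le_geometric ((2 : ℝ) ^ (q - p)) (5 * C * 2 ^ q * K ^ (q - p))
      (Real.rpow_lt_one_of_one_lt_of_neg (by norm_num) (by linarith)) ?_
    intro n
    rw [dist_eq_norm]
    refine (hdiff n).trans (le_of_eq ?_)
    have e1 : a (n + 1) = 2 * a n := by simp only [ha]; ring
    have e2 : b (n + 1) = ((2 : ℝ) ^ q * (a n) ^ q)⁻¹ := by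
      simp only [hb]
      rw [e1, Real.rpow_neg (by linarith [ha0 n]), Real.mul_rpow (by norm_num) (ha0 n).le]
    have e3 : (a n) ^ (q - p) = K ^ (q - p) * ((2 : ℝ) ^ (q - p)) ^ n := by
      simp only [ha]
      rw [Real.mul_rpow (by linarith) (by positivity), ← Real.rpow_natCast,
        ← Real.rpow_natCast, ← Real.rpow_mul (by norm_num), ← Real.rpow_mul (by norm_num),
        mul_comm (n : ℝ)]
    have e4 : (a n) ^ (q - p) = (a n) ^ q * (a n) ^ (-p) := by
      rw [← Real.rpow_add (ha0 n)]; ring_nf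
    rw [e2, div_inv_eq_mul]
    calc _ = 5 * C * 2 ^ q * ((a n) ^ q * (a n) ^ (-p)) := by ring
      _ = _ := by rw [← e4, e3]; ring
  obtain ⟨w, hw⟩ := cauchySeq_tendsto_of_complete hcau
  refine ⟨‖w‖ + 1, by positivity, w, by linarith, ?_⟩
  have lim1 : Filter.Tendsto (fun n => cfc (fpFun q) A (u n)) Filter.atTop
      (nhds (cfc (fpFun q) A w)) :=
    ((cfc (fpFun q) A).continuous.tendsto w).comp hw
  have hbd : ∀ n, ‖xdag - cfc (fpFun q) A (u n)‖ ≤ 5 * (C * (a n) ^ (-p)) := by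
    intro n
    have hc1 : ContinuousOn (fun t => fpFun q t * h n t) (spectrum ℝ A) := hfc.mul (hhc n)
    have h1 : xdag - cfc (fpFun q) A (u n)
        = cfc (fun t => (fun _ : ℝ => (1 : ℝ)) t - fpFun q t * h n t) A xdag := by
      rw [cfc_sub (fun _ : ℝ => (1 : ℝ)) (fun t => fpFun q t * h n t) A
        continuousOn_const hc1, cfc_const_one ℝ A, cfc_mul (fpFun q) (h n) A hfc (hhc n)]
      rfl
    rw [h1]
    refine (aux_norm_le A _ (r n) (continuousOn_const.sub hc1) (hrc n) 5 (by norm_num) ?_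
      xdag).trans (mul_le_mul_of_nonneg_left (hrate' n) (by norm_num))
    intro t ht
    have e0 : fpFun q t * h n t = fpFun q t / max (fpFun q t) (b n) := by
      simp only [hh]; ring
    change |1 - fpFun q t * h n t| ≤ _
    rw [e0]
    rcases lt_or_ge (fpFun q t) (b n) with hlt | hge
    · have h2 := hlow n t ht hlt
      have e1 : 0 ≤ fpFun q t / max (fpFun q t) (b n) := div_nonneg (hf0 t ht) (hm0 _ _).le
      have e2 : fpFun q t / max (fpFun q t) (b n) ≤ 1 :=
        div_le_one_of_le₀ (le_max_left _ _) (hm0 _ _).le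
      rw [abs_of_nonneg (by linarith)]
      linarith
    · rw [max_eq_left hge, div_self ((hb0 n).trans_le hge).ne', sub_self, abs_zero]
      positivity
  have hat : Filter.Tendsto a Filter.atTop Filter.atTop :=
    (tendsto_pow_atTop_atTop_of_one_lt (by norm_num : (1 : ℝ) < 2)).const_mul_atTop
      (by linarith)
  have hz : Filter.Tendsto (fun n => 5 * (C * (a n) ^ (-p))) Filter.atTop (nhds 0) := by
    have := (((tendsto_rpow_neg_atTop hp).comp hat).const_mul C).const_mul 5
    simpa using this
  have lim2 : Filter.Tendsto (fun n => cfc (fpFun q) A (u n)) Filter.atTop (nhds xdag) := by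
    rw [tendsto_iff_norm_sub_tendsto_zero]
    refine squeeze_zero (fun n => norm_nonneg _) (fun n => ?_) hz
    rw [norm_sub_rev]; exact hbd n
  exact tendsto_nhds_unique lim2 lim1
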